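/- arXiv:2509.01745 — 2 statements merged into one kernel-verified Lean document; each statement's English description precedes it below -/
import Mathlib

section
/- Let $\Gamma = H \times \Gamma_0$ with the product-structure kernel assumption and positivity $P_H(h,B)>0$. Let $\mu$ be a probability measure on $\Gamma\times\Gamma$ with $D(\mu\Vert\mu^P) < \infty$. Then $\sup_{G\in\mathcal{A}_0} |\mu^P(G)-\mu(G)| \le \frac{1}{\sqrt 2}\bigl(D(\mu\Vert\mu^P) - D_\Delta(\mu\Vert\mu^P)\bigr)^{1/2}$, where $\mathcal{A}_0 = \mathcal{B}_0'\otimes\mathcal{B}_1'$, $\Delta = \{A_h\times B : h\in H, B\in\Lambda_1\}$ is the finite partition of $\Gamma\times\Gamma$, and $D_\Delta(\mu\Vert\mu^P) = \sum_{A_h\times B\in\Delta}\mu(A_h\times B)\log\frac{\mu(A_h\times B)}{\mu^P(A_h\times B)}$. -/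
open MeasureTheory ProbabilityTheory
open scoped Classical

/-- The relative entropy (Kullback-Leibler divergence) of `μ` with respect to `ρ`,
as an extended real number: it equals `∫ log (dμ/dρ) dμ` when `μ ≪ ρ` and this
integral is well defined, and `+∞` otherwise. -/
noncomputable def relEnt {Ω : Type*} [MeasurableSpace Ω] (μ ρ : Measure Ω) : EReal :=
  if μ ≪ ρ ∧ Integrable (fun x => Real.log (μ.rnDeriv ρ x).toReal) μ
  then ((∫ x, Real.log (μ.rnDeriv ρ x).toReal ∂μ : ℝ) : EReal)
  else ⊤

theorem aux_gibbs {Ω : Type*} [MeasurableSpace Ω] (μ Q : Measure Ω) [IsProbabilityMeasure μ]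
    [IsProbabilityMeasure Q] (hac : μ ≪ Q)
    (hint : Integrable (fun x => Real.log (μ.rnDeriv Q x).toReal) μ)
    (g : Ω → ℝ) (hg : Measurable g) (hg0 : ∀ x, 0 ≤ g x) (hpos : ∀ᵐ x ∂μ, 0 < g x)
    (hlog : Integrable (fun x => Real.log (g x)) μ)
    (hgint : Integrable g Q) (hle : ∫ x, g x ∂Q ≤ 1) :
    ∫ x, Real.log (g x) ∂μ ≤ ∫ x, Real.log (μ.rnDeriv Q x).toReal ∂μ := by
  set r : Ω → ℝ := fun x => (μ.rnDeriv Q x).toReal with hr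
  have hrm : Measurable r := (Measure.measurable_rnDeriv μ Q).ennreal_toReal
  have hlint : ∫⁻ x, ENNReal.ofReal (g x / r x) ∂μ ≤ 1 := by
    rw [← lintegral_rnDeriv_mul hac (by fun_prop)]
    calc ∫⁻ x, μ.rnDeriv Q x * ENNReal.ofReal (g x / r x) ∂Q
        ≤ ∫⁻ x, ENNReal.ofReal (g x) ∂Q := by
          apply lintegral_mono_ae
          filter_upwards [Measure.rnDeriv_lt_top μ Q] with x hx
          have h1 : μ.rnDeriv Q x = ENNReal.ofReal (r x) := (ENNReal.ofReal_toReal hx.ne).symm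
          rw [h1, ← ENNReal.ofReal_mul ENNReal.toReal_nonneg]
          apply ENNReal.ofReal_le_ofReal
          by_cases h0 : r x = 0
          · simp [h0, hg0]
          · rw [mul_div_cancel₀ _ h0]
      _ = ENNReal.ofReal (∫ x, g x ∂Q) :=
          (ofReal_integral_eq_lintegral_ofReal hgint (ae_of_all _ hg0)).symm
      _ ≤ 1 := by simpa using hle
  have hq0 : ∀ x, 0 ≤ g x / r x := fun x => div_nonneg (hg0 x) ENNReal.toReal_nonneg
  have hqint : Integrable (fun x => g x / r x) μ := by
    refine ⟨(hg.div hrm).aestronglyMeasurable, ?_⟩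
    rw [hasFiniteIntegral_iff_ofReal (ae_of_all _ hq0)]
    exact hlint.trans_lt ENNReal.one_lt_top
  have hqle : ∫ x, g x / r x ∂μ ≤ 1 := by
    rw [integral_eq_lintegral_of_nonneg_ae (ae_of_all _ hq0) (hg.div hrm).aestronglyMeasurable]
    exact ENNReal.toReal_le_of_le_ofReal zero_le_one (by simpa using hlint)
  have key : ∫ x, (Real.log (g x) - Real.log (r x)) ∂μ ≤ ∫ x, (g x / r x - 1) ∂μ := by
    apply integral_mono_ae (hlog.sub hint) (hqint.sub (integrable_const _))
    filter_upwards [hpos, Measure.rnDeriv_pos hac, hac.ae_le (Measure.rnDeriv_lt_top μ Q)]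
      with x h1 h2 h3
    have h4 : 0 < r x := ENNReal.toReal_pos h2.ne' h3.ne
    show Real.log (g x) - Real.log (r x) ≤ g x / r x - 1
    rw [← Real.log_div h1.ne' h4.ne']
    exact Real.log_le_sub_one_of_pos (div_pos h1 h4)
  rw [integral_sub hlog hint, integral_sub hqint (integrable_const _)] at key
  simp at key
  linarith

theorem aux_hoeffding {Ω : Type*} [MeasurableSpace Ω] (Q : Measure Ω) [IsProbabilityMeasure Q]
    (G : Set Ω) (hG : MeasurableSet G) (t : ℝ) :
    (1 + (Real.exp t - 1) * Q.real G) * Real.exp (-(t * Q.real G + t ^ 2 / 8)) ≤ 1 := by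
  have h := hasSubgaussianMGF_of_mem_Icc (μ := Q) (X := G.indicator (fun _ => (1 : ℝ)))
    (a := 0) (b := 1) ((measurable_const.indicator hG).aemeasurable)
    (ae_of_all _ fun x => by by_cases hx : x ∈ G <;> simp [hx])
  have h2 := h.mgf_le t
  have hE : ∫ x, G.indicator (fun _ => (1 : ℝ)) x ∂Q = Q.real G := by
    rw [integral_indicator hG]; simp
  have hm : mgf (fun ω ↦ G.indicator (fun _ => (1 : ℝ)) ω - ∫ x, G.indicator (fun _ => (1 : ℝ)) x ∂Q) Q t
      = (1 + (Real.exp t - 1) * Q.real G) * Real.exp (-(t * Q.real G)) := by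
    rw [hE]
    unfold mgf
    have : ∀ x, Real.exp (t * (G.indicator (fun _ => (1 : ℝ)) x - Q.real G))
        = (1 + (Real.exp t - 1) * G.indicator (fun _ => (1 : ℝ)) x) * Real.exp (-(t * Q.real G)) := by
      intro x
      by_cases hx : x ∈ G <;> simp [hx, ← Real.exp_add] <;> ring_nf
    simp_rw [this]
    rw [integral_mul_const, integral_add (integrable_const _)
      (((integrable_const _).indicator hG).const_mul _), integral_const_mul, hE]
    simp
  rw [hm] at h2
  have h3 : ((((‖(1 : ℝ) - 0‖₊ / 2) ^ 2 : NNReal) : ℝ) * t ^ 2 / 2) = t ^ 2 / 8 := by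
    simp; ring
  rw [h3] at h2
  calc _ = (1 + (Real.exp t - 1) * Q.real G) * Real.exp (-(t * Q.real G)) * Real.exp (-(t^2/8)) := by
        rw [mul_assoc, ← Real.exp_add]; ring_nf
    _ ≤ Real.exp (t ^ 2 / 8) * Real.exp (-(t^2/8)) := by gcongr
    _ = 1 := by rw [← Real.exp_add]; simp

theorem aux_integral_comp {Ω ι : Type*} [MeasurableSpace Ω] [Fintype ι]
    [MeasurableSpace ι] [MeasurableSingletonClass ι] (Q : Measure Ω) [IsFiniteMeasure Q]
    (k : Ω → ι) (hk : Measurable k) (f : ι → ℝ) :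
    Integrable (fun x => f (k x)) Q ∧
    ∫ x, f (k x) ∂Q = ∑ i, Q.real (k ⁻¹' {i}) * f i := by
  have hi : Integrable f (Q.map k) := Integrable.of_finite
  refine ⟨hi.comp_measurable hk, ?_⟩
  rw [← integral_map hk.aemeasurable hi.aestronglyMeasurable, integral_fintype hi]
  simp [map_measureReal_apply hk]

theorem aux_main {Ω ι : Type*} [MeasurableSpace Ω] [Fintype ι]
    [MeasurableSpace ι] [MeasurableSingletonClass ι]
    (μ Q : Measure Ω) [IsProbabilityMeasure μ]
    [IsProbabilityMeasure Q] (hac : μ ≪ Q)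
    (hint : Integrable (fun x => Real.log (μ.rnDeriv Q x).toReal) μ)
    (k : Ω → ι) (hk : Measurable k) (G : Set Ω) (hG : MeasurableSet G)
    (hQG : ∑ i, μ.real (k ⁻¹' {i}) / Q.real (k ⁻¹' {i}) * Q.real (k ⁻¹' {i} ∩ G) = Q.real G) :
    |Q.real G - μ.real G| ≤ Real.sqrt ((∫ x, Real.log (μ.rnDeriv Q x).toReal ∂μ
      - ∑ i, μ.real (k ⁻¹' {i}) *
          Real.log (μ.real (k ⁻¹' {i}) / Q.real (k ⁻¹' {i}))) / 2) := by
  set c : ι → ℝ := fun i => μ.real (k ⁻¹' {i}) / Q.real (k ⁻¹' {i}) with hc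
  have hc0 : ∀ i, 0 ≤ c i := fun i => by positivity
  have hks : ∀ i, MeasurableSet (k ⁻¹' {i}) := fun i => hk (measurableSet_singleton i)
  obtain ⟨hlw, elw⟩ := aux_integral_comp μ k hk (fun i => Real.log (c i))
  obtain ⟨hw, ew⟩ := aux_integral_comp Q k hk c
  obtain ⟨hwG, ewG⟩ := aux_integral_comp (Q.restrict G) k hk c
  have ew1 : ∫ x, c (k x) ∂Q = 1 := by
    have h1 := (aux_integral_comp μ k hk (fun _ => (1 : ℝ))).2
    simp at h1
    rw [ew, h1]
    apply Finset.sum_congr rfl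
    intro i _
    by_cases h0 : Q.real (k ⁻¹' {i}) = 0
    · have : μ (k ⁻¹' {i}) = 0 := hac ((measureReal_eq_zero_iff).1 h0)
      simp [h0, measureReal_def, this]
    · rw [hc]; field_simp
  have ewG1 : ∫ x in G, c (k x) ∂Q = Q.real G := by
    rw [ewG, ← hQG]
    apply Finset.sum_congr rfl
    intro i _
    rw [measureReal_restrict_apply (hks i), mul_comm]
  have hcpos : ∀ᵐ x ∂μ, 0 < c (k x) := by
    have : ∀ i, ∀ᵐ x ∂μ, k x = i → 0 < c i := by
      intro i
      by_cases h0 : μ (k ⁻¹' {i}) = 0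
      · have h5 : ∀ᵐ x ∂μ, x ∉ k ⁻¹' {i} := measure_eq_zero_iff_ae_notMem.1 h0
        filter_upwards [h5] with x hx h
        exact absurd h hx
      · refine ae_of_all _ fun x _ => ?_
        have h1 : Q (k ⁻¹' {i}) ≠ 0 := fun h => h0 (hac h)
        exact div_pos (ENNReal.toReal_pos h0 (measure_ne_top _ _))
          (ENNReal.toReal_pos h1 (measure_ne_top _ _))
    filter_upwards [ae_all_iff.2 this] with x hx using hx _ rfl
  set D := ∫ x, Real.log (μ.rnDeriv Q x).toReal ∂μ with hD
  set I : Ω → ℝ := G.indicator (fun _ => (1 : ℝ)) with hI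
  have hIm : Measurable I := measurable_const.indicator hG
  have key : ∀ t : ℝ, t * (μ.real G - Q.real G) - t ^ 2 / 8 ≤ D - ∑ i, μ.real (k ⁻¹' {i}) * Real.log (c i) := by
    intro t
    set a := t * Q.real G + t ^ 2 / 8 with ha
    have hck : Measurable fun x => c (k x) := (measurable_of_finite c).comp hk
    have hgform : ∀ x, c (k x) * Real.exp (t * I x) * Real.exp (-a)
        = (c (k x) + (Real.exp t - 1) * G.indicator (fun x => c (k x)) x) * Real.exp (-a) := by
      intro x
      by_cases hx : x ∈ G <;> simp [hI, hx]
      ring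
    have hgi : Integrable (fun x => c (k x) * Real.exp (t * I x) * Real.exp (-a)) Q := by
      simp_rw [hgform]
      exact (hw.add ((hw.indicator hG).const_mul _)).mul_const _
    have hlogform : ∀ᵐ x ∂μ, Real.log (c (k x) * Real.exp (t * I x) * Real.exp (-a))
        = Real.log (c (k x)) + t * I x - a := by
      filter_upwards [hcpos] with x hx
      rw [Real.log_mul (by positivity) (by positivity), Real.log_mul (by positivity) (by positivity),
        Real.log_exp, Real.log_exp]
      ring
    have hIi : Integrable I μ := (integrable_const _).indicator hG
    have hli : Integrable (fun x => Real.log (c (k x)) + t * I x - a) μ :=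
      (hlw.add (hIi.const_mul t)).sub (integrable_const _)
    have h := aux_gibbs μ Q hac hint (fun x => c (k x) * Real.exp (t * I x) * Real.exp (-a))
      (by fun_prop) (fun x => mul_nonneg (mul_nonneg (hc0 _) (Real.exp_nonneg _)) (Real.exp_nonneg _))
      (by filter_upwards [hcpos] with x hx; positivity)
      (hli.congr (by filter_upwards [hlogform] with x hx using hx.symm)) hgi (by
        simp_rw [hgform]
        rw [integral_mul_const, integral_add hw ((hw.indicator hG).const_mul _), integral_const_mul,
          integral_indicator hG, ew1, ewG1]
        exact aux_hoeffding Q G hG t)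
    have hIe : ∫ x, I x ∂μ = μ.real G := by
      rw [hI, integral_indicator hG]; simp
    rw [integral_congr_ae hlogform, integral_sub (f := fun x => Real.log (c (k x)) + t * I x)
      (hlw.add (hIi.const_mul t)) (integrable_const _),
      integral_add hlw (hIi.const_mul t), elw, integral_const_mul, hIe] at h
    simp at h
    linarith
  have := key (4 * (μ.real G - Q.real G))
  apply Real.abs_le_sqrt
  nlinarith

theorem aux_main2 {Ω ι : Type*} [MeasurableSpace Ω] [Fintype ι]
    (μ Q : Measure Ω) [IsProbabilityMeasure μ]
    [IsProbabilityMeasure Q] (hac : μ ≪ Q)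
    (hint : Integrable (fun x => Real.log (μ.rnDeriv Q x).toReal) μ)
    (k : Ω → ι) (s : ι → Set Ω) (hs : ∀ i, k ⁻¹' {i} = s i) (hk : ∀ i, MeasurableSet (s i))
    (G : Set Ω) (hG : MeasurableSet G)
    (hQG : ∑ i, μ.real (s i) / Q.real (s i) * Q.real (s i ∩ G) = Q.real G) :
    |Q.real G - μ.real G| ≤ Real.sqrt ((∫ x, Real.log (μ.rnDeriv Q x).toReal ∂μ
      - ∑ i, μ.real (s i) *
          Real.log (μ.real (s i) / Q.real (s i))) / 2) := by
  let _ : MeasurableSpace ι := ⊤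
  have hss : s = fun i => k ⁻¹' {i} := funext fun i => (hs i).symm
  subst hss
  exact aux_main μ Q hac hint k (measurable_to_countable' hk) G hG hQG

theorem aux_rect {H Γ0 : Type*} [Fintype H]
    [MeasurableSpace H] [MeasurableSingletonClass H] [MeasurableSpace Γ0]
    (Λ₁ : Finset (Set (H × Γ0)))
    (hΛmeas : ∀ B ∈ Λ₁, MeasurableSet B)
    (hΛdisj : (Λ₁ : Set (Set (H × Γ0))).Pairwise Disjoint)
    (hΛcover : ⋃₀ (Λ₁ : Set (Set (H × Γ0))) = Set.univ)
    (P : Kernel (H × Γ0) (H × Γ0)) [IsMarkovKernel P]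
    (PH : H → Set (H × Γ0) → ENNReal)
    (hPHnorm : ∀ h : H, ∑ B ∈ Λ₁, PH h B = 1)
    (hPHpos : ∀ (h : H), ∀ B ∈ Λ₁, 0 < PH h B)
    (hPB : ∀ (x : H × Γ0), ∀ B ∈ Λ₁, P x B = PH x.1 B)
    (μ : Measure ((H × Γ0) × (H × Γ0))) [IsProbabilityMeasure μ]
    (Q : Measure ((H × Γ0) × (H × Γ0))) (hQ : Q = μ.fst.compProd P)
    (F C : Set (H × Γ0)) (hF : MeasurableSet F) (hC : MeasurableSet C)
    (hPC : ∀ (x : H × Γ0), ∀ B ∈ Λ₁, P x (B ∩ C) = PH x.1 B * P x C) :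
    ∑ h : H, ∑ B ∈ Λ₁, μ ((Prod.fst ⁻¹' {h}) ×ˢ B) / Q ((Prod.fst ⁻¹' {h}) ×ˢ B) *
      Q (((Prod.fst ⁻¹' {h}) ×ˢ B) ∩ F ×ˢ C) = Q (F ×ˢ C) := by
  have hA : ∀ h : H, MeasurableSet (Prod.fst ⁻¹' {h} : Set (H × Γ0)) :=
    fun h => measurable_fst (measurableSet_singleton h)
  have hPHtop : ∀ h, ∀ B ∈ Λ₁, PH h B ≠ ⊤ := by
    intro h B hB htop
    have := ENNReal.sum_eq_top.2 ⟨B, hB, htop⟩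
    rw [hPHnorm h] at this
    exact ENNReal.one_ne_top this
  have hQcell : ∀ h, ∀ B ∈ Λ₁, Q ((Prod.fst ⁻¹' {h}) ×ˢ B)
      = PH h B * μ.fst (Prod.fst ⁻¹' {h}) := by
    intro h B hB
    rw [hQ, Measure.compProd_apply_prod (hA h) (hΛmeas B hB),
      setLIntegral_congr_fun (g := fun _ => PH h B) (hA h)]
    · simp
    · intro x hx
      have : x.1 = h := hx
      simp [hPB x B hB, this]
  have hQcellC : ∀ h, ∀ B ∈ Λ₁, Q (((Prod.fst ⁻¹' {h}) ×ˢ B) ∩ F ×ˢ C)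
      = PH h B * Q ((Prod.fst ⁻¹' {h} ∩ F) ×ˢ C) := by
    intro h B hB
    rw [Set.prod_inter_prod, hQ, Measure.compProd_apply_prod ((hA h).inter hF) ((hΛmeas B hB).inter hC),
      Measure.compProd_apply_prod ((hA h).inter hF) hC,
      ← lintegral_const_mul _ (P.measurable_coe hC)]
    apply setLIntegral_congr_fun ((hA h).inter hF)
    intro x hx
    have : x.1 = h := hx.1
    simp [hPC x B hB, this]
  have hμsum : ∀ h : H, ∑ B ∈ Λ₁, μ ((Prod.fst ⁻¹' {h}) ×ˢ B) = μ.fst (Prod.fst ⁻¹' {h}) := by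
    intro h
    rw [Measure.fst_apply (hA h), ← measure_biUnion_finset]
    · congr 1
      ext z
      have hz : z.2 ∈ ⋃₀ (Λ₁ : Set (Set (H × Γ0))) := by rw [hΛcover]; trivial
      obtain ⟨B, hB, hzB⟩ := hz
      simp only [Set.mem_iUnion, Set.mem_prod, Set.mem_preimage, Set.mem_singleton_iff]
      constructor
      · rintro ⟨B, _, h1, _⟩
        exact h1
      · intro h1
        exact ⟨B, hB, h1, hzB⟩
    · intro B hB B' hB' hne
      exact Set.disjoint_left.2 fun z hz hz' =>
        Set.disjoint_left.1 (hΛdisj hB hB' hne) hz.2 hz'.2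
    · intro B hB
      exact (hA h).prod (hΛmeas B hB)
  have hinner : ∀ h : H, ∑ B ∈ Λ₁, μ ((Prod.fst ⁻¹' {h}) ×ˢ B) / Q ((Prod.fst ⁻¹' {h}) ×ˢ B) *
      Q (((Prod.fst ⁻¹' {h}) ×ˢ B) ∩ F ×ˢ C) = Q ((Prod.fst ⁻¹' {h} ∩ F) ×ˢ C) := by
    intro h
    by_cases h0 : μ.fst (Prod.fst ⁻¹' {h}) = 0
    · have hz : Q ((Prod.fst ⁻¹' {h} ∩ F) ×ˢ C) = 0 := by
        rw [hQ, Measure.compProd_apply_prod ((hA h).inter hF) hC]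
        exact setLIntegral_measure_zero _ _ (measure_mono_null Set.inter_subset_left h0)
      rw [hz]
      apply Finset.sum_eq_zero
      intro B hB
      rw [hQcellC h B hB, hz]
      simp
    · have htop : μ.fst (Prod.fst ⁻¹' {h}) ≠ ⊤ := measure_ne_top _ _
      have : ∀ B ∈ Λ₁, μ ((Prod.fst ⁻¹' {h}) ×ˢ B) / Q ((Prod.fst ⁻¹' {h}) ×ˢ B) *
          Q (((Prod.fst ⁻¹' {h}) ×ˢ B) ∩ F ×ˢ C) = μ ((Prod.fst ⁻¹' {h}) ×ˢ B) *
          ((μ.fst (Prod.fst ⁻¹' {h}))⁻¹ * Q ((Prod.fst ⁻¹' {h} ∩ F) ×ˢ C)) := by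
        intro B hB
        have hp := (hPHpos h B hB).ne'
        rw [hQcellC h B hB, hQcell h B hB, div_eq_mul_inv,
          ENNReal.mul_inv (Or.inl hp) (Or.inl (hPHtop h B hB))]
        calc _ = μ ((Prod.fst ⁻¹' {h}) ×ˢ B) * ((PH h B)⁻¹ * PH h B) *
          ((μ.fst (Prod.fst ⁻¹' {h}))⁻¹ * Q ((Prod.fst ⁻¹' {h} ∩ F) ×ˢ C)) := by ring
          _ = _ := by rw [ENNReal.inv_mul_cancel hp (hPHtop h B hB), mul_one]
      rw [Finset.sum_congr rfl this, ← Finset.sum_mul, hμsum h, ← mul_assoc,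
        ENNReal.mul_inv_cancel h0 htop, one_mul]
  rw [Finset.sum_congr rfl fun h _ => hinner h]
  have hU : F ×ˢ C = ⋃ h : H, (Prod.fst ⁻¹' {h} ∩ F) ×ˢ C := by
    ext z; simp
  rw [hU, measure_iUnion, tsum_fintype]
  · intro h h' hne
    refine Set.disjoint_left.2 fun z hz hz' => hne ?_
    have h1 : z.1.1 = h := hz.1.1
    have h2 : z.1.1 = h' := hz'.1.1
    exact h1.symm.trans h2
  · intro h
    exact ((hA h).inter hF).prod hC

theorem aux_ext {Ω : Type*} {m : MeasurableSpace Ω} [m0 : MeasurableSpace Ω] {ι : Type*} (s : Finset ι) (c : ι → ENNReal)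
    (Q : @Measure Ω m0) [IsFiniteMeasure Q] (cell : ι → Set Ω)
    (hm : m ≤ m0)
    (S : Set (Set Ω)) (hS : m = MeasurableSpace.generateFrom S) (hpi : IsPiSystem S)
    (hu : Set.univ ∈ S)
    (hcell : ∀ i ∈ s, MeasurableSet[m0] (cell i))
    (h : ∀ G ∈ S, ∑ i ∈ s, c i * Q (cell i ∩ G) = Q G) (G : Set Ω) (hG : MeasurableSet[m] G) :
    ∑ i ∈ s, c i * Q (cell i ∩ G) = Q G := by
  have hν : ∀ T, MeasurableSet[m0] T →
      (∑ i ∈ s, c i • Q.restrict (cell i)) T = ∑ i ∈ s, c i * Q (cell i ∩ T) := by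
    intro T hT
    rw [Measure.finsetSum_apply]
    apply Finset.sum_congr rfl
    intro i _
    rw [Measure.smul_apply, Measure.restrict_apply hT, Set.inter_comm, smul_eq_mul]
  have hSm : ∀ T ∈ S, MeasurableSet[m0] T := fun T hT =>
    hm T (by rw [hS]; exact MeasurableSpace.measurableSet_generateFrom hT)
  have := ext_on_measurableSpace_of_generate_finite m0 (μ := Q)
    (ν := ∑ i ∈ s, c i • Q.restrict (cell i)) S
    (fun T hT => by rw [hν T (hSm T hT), h T hT]) hm hS hpi
    (by rw [hν _ (hSm _ hu), h _ hu]) hG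
  rw [this, hν G (hm G hG)]

/-- Proposition 3.4 of the paper: under the product-structure
assumption with positivity, if `D(μ‖μ^P) < ∞` then
`sup_{G ∈ 𝒜₀} |μ^P(G) - μ(G)| ≤ (1/√2) (D(μ‖μ^P) - D_Δ(μ‖μ^P))^{1/2}`,
where `Δ = {A_h × B : h ∈ H, B ∈ Λ₁}` and
`D_Δ(μ‖μ^P) = ∑_{A_h × B ∈ Δ} μ(A_h × B) log (μ(A_h × B) / μ^P(A_h × B))`. -/
theorem stmt_8 {H Γ0 : Type*} [Fintype H] [Nonempty H]
    [MeasurableSpace H] [MeasurableSingletonClass H] [MeasurableSpace Γ0]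
    (Λ₁ : Finset (Set (H × Γ0)))
    (hΛmeas : ∀ B ∈ Λ₁, MeasurableSet B)
    (hΛdisj : (Λ₁ : Set (Set (H × Γ0))).Pairwise Disjoint)
    (hΛcover : ⋃₀ (Λ₁ : Set (Set (H × Γ0))) = Set.univ)
    (P : Kernel (H × Γ0) (H × Γ0)) [IsMarkovKernel P]
    (PH : H → Set (H × Γ0) → ENNReal) (P0 : Γ0 → Set (H × Γ0) → ENNReal)
    (hPHnorm : ∀ h : H, ∑ B ∈ Λ₁, PH h B = 1)
    (hP0norm : ∀ γ : Γ0, P0 γ Set.univ = 1)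
    (hPHpos : ∀ (h : H), ∀ B ∈ Λ₁, 0 < PH h B)
    (μ : Measure ((H × Γ0) × (H × Γ0))) [IsProbabilityMeasure μ]
    (μL : Measure (H × Γ0)) (hμL : μL = μ.fst)
    (μP : Measure ((H × Γ0) × (H × Γ0))) (hμP : μP = μL.compProd P)
    (D : EReal) (hD : D = relEnt μ μP) (hfin : D ≠ ⊤)
    (DΔ : ℝ)
    (hDΔ : DΔ = ∑ h : H, ∑ B ∈ Λ₁, (μ ((Prod.fst ⁻¹' {h}) ×ˢ B)).toReal *
        Real.log ((μ ((Prod.fst ⁻¹' {h}) ×ˢ B)).toReal / (μP ((Prod.fst ⁻¹' {h}) ×ˢ B)).toReal))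
    (𝓑₁ : MeasurableSpace (H × Γ0))
    (h𝓑₁ : 𝓑₁ ≤ MeasurableSpace.comap Prod.snd inferInstance)
    (hprod : ∀ (x : H × Γ0), ∀ B ∈ Λ₁, ∀ C : Set (H × Γ0), MeasurableSet[𝓑₁] C →
      P x (B ∩ C) = PH x.1 B * P0 x.2 C) :
    ∀ G : Set ((H × Γ0) × (H × Γ0)),
      MeasurableSet[(MeasurableSpace.comap (Prod.snd : H × Γ0 → Γ0)
          inferInstance).prod 𝓑₁] G →
      |(μP G).toReal - (μ G).toReal| ≤ Real.sqrt ((D.toReal - DΔ) / 2) := by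
  letI mI : MeasurableSpace (H × Γ0) := Prod.instMeasurableSpace
  have hmB : ∀ C : Set (H × Γ0), MeasurableSet[𝓑₁] C →
      MeasurableSet[Prod.instMeasurableSpace] C := fun C hC =>
    (measurable_snd (α := H) (β := Γ0)).comap_le C (h𝓑₁ C hC)
  have hmF : ∀ C : Set (H × Γ0), MeasurableSet[MeasurableSpace.comap (Prod.snd : H × Γ0 → Γ0)
      inferInstance] C → MeasurableSet[Prod.instMeasurableSpace] C := fun C hC =>
    (measurable_snd (α := H) (β := Γ0)).comap_le C hC
  have hPB : ∀ (x : H × Γ0), ∀ B ∈ Λ₁, P x B = PH x.1 B := by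
    intro x B hB
    have := hprod x B hB Set.univ (@MeasurableSet.univ _ 𝓑₁)
    simpa [hP0norm] using this
  have hPC : ∀ C : Set (H × Γ0), MeasurableSet[𝓑₁] C → ∀ (x : H × Γ0), ∀ B ∈ Λ₁,
      P x (B ∩ C) = PH x.1 B * P x C := by
    intro C hC x B hB
    have hsum : P x C = P0 x.2 C := by
      have h1 : C = ⋃ B ∈ Λ₁, B ∩ C := by
        ext z
        have hz : z ∈ ⋃₀ (Λ₁ : Set (Set (H × Γ0))) := by rw [hΛcover]; trivial
        obtain ⟨B, hB, hzB⟩ := hz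
        simp only [Set.mem_iUnion, Set.mem_inter_iff]
        exact ⟨fun h => ⟨B, hB, hzB, h⟩, fun ⟨_, _, _, h⟩ => h⟩
      have h2 : P x C = ∑ B ∈ Λ₁, P x (B ∩ C) := by
        conv_lhs => rw [h1]
        rw [measure_biUnion_finset]
        · intro B hB B' hB' hne
          exact (hΛdisj hB hB' hne).mono Set.inter_subset_left Set.inter_subset_left
        · intro B hB
          exact (hΛmeas B hB).inter (hmB C hC)
      rw [h2, Finset.sum_congr rfl fun B hB => hprod x B hB C hC, ← Finset.sum_mul, hPHnorm, one_mul]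
    rw [hsum, hprod x B hB C hC]
  intro G hG
  subst hμL
  have hQprob : IsProbabilityMeasure μP := by rw [hμP]; infer_instance
  -- finiteness of the relative entropy
  have hfin' : μ ≪ μP ∧ Integrable (fun x => Real.log (μ.rnDeriv μP x).toReal) μ := by
    by_contra hcon
    exact hfin (by rw [hD, relEnt, if_neg hcon])
  have hDr : D.toReal = ∫ x, Real.log (μ.rnDeriv μP x).toReal ∂μ := by
    rw [hD, relEnt, if_pos hfin', EReal.toReal_coe]
  -- the cell map
  have hex : ∀ y : H × Γ0, ∃ B : Λ₁, y ∈ B.1 := by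
    intro y
    have hz : y ∈ ⋃₀ (Λ₁ : Set (Set (H × Γ0))) := by rw [hΛcover]; trivial
    obtain ⟨B, hB, hzB⟩ := hz
    exact ⟨⟨B, hB⟩, hzB⟩
  choose kB hkB using hex
  have huniq : ∀ (y : H × Γ0) (B : Λ₁), y ∈ B.1 → kB y = B := by
    intro y B hy
    by_contra hne
    exact Set.disjoint_left.1 (hΛdisj (kB y).2 B.2 (fun h => hne (Subtype.ext h))) (hkB y) hy
  let cell : H × Λ₁ → Set ((H × Γ0) × (H × Γ0)) := fun i => (Prod.fst ⁻¹' {i.1}) ×ˢ i.2.1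
  have hcellm : ∀ i, MeasurableSet (cell i) := fun i =>
    MeasurableSet.prod (measurable_fst (measurableSet_singleton i.1)) (hΛmeas _ i.2.2)
  have hle : (MeasurableSpace.comap (Prod.snd : H × Γ0 → Γ0) inferInstance).prod 𝓑₁
      ≤ Prod.instMeasurableSpace :=
    sup_le_sup (MeasurableSpace.comap_mono hmF) (MeasurableSpace.comap_mono hmB)
  have hQG : ∑ i, μ (cell i) / μP (cell i) * μP (cell i ∩ G) = μP G := by
    refine aux_ext Finset.univ (fun i => μ (cell i) / μP (cell i)) μP cell hle _
      (@generateFrom_prod _ _ (MeasurableSpace.comap (Prod.snd : H × Γ0 → Γ0) inferInstance)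
        𝓑₁).symm
      (@isPiSystem_prod _ _ (MeasurableSpace.comap (Prod.snd : H × Γ0 → Γ0) inferInstance) 𝓑₁)
      ?_ (fun i _ => hcellm i) ?_ G hG
    · exact ⟨Set.univ, @MeasurableSet.univ _ (MeasurableSpace.comap (Prod.snd : H × Γ0 → Γ0) inferInstance), Set.univ, @MeasurableSet.univ _ 𝓑₁,
        Set.univ_prod_univ⟩
    · rintro _ ⟨F, hF, C, hC, rfl⟩
      have := aux_rect Λ₁ hΛmeas hΛdisj hΛcover P PH hPHnorm hPHpos hPB μ μP hμP F C
        (hmF F hF) (hmB C hC) (hPC C hC)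
      refine Eq.trans ?_ this
      rw [Fintype.sum_prod_type]
      refine Finset.sum_congr rfl fun h _ => ?_
      exact Finset.sum_coe_sort Λ₁ (fun B => μ ((Prod.fst ⁻¹' {h}) ×ˢ B) /
        μP ((Prod.fst ⁻¹' {h}) ×ˢ B) * μP (((Prod.fst ⁻¹' {h}) ×ˢ B) ∩ F ×ˢ C))
  have hQGr : ∑ i, μ.real (cell i) / μP.real (cell i) * μP.real (cell i ∩ G) = μP.real G := by
    have htop : ∀ i ∈ Finset.univ, μ (cell i) / μP (cell i) * μP (cell i ∩ G) ≠ ⊤ := by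
      intro i hi ht
      have := ENNReal.sum_eq_top
        (f := fun i => μ (cell i) / μP (cell i) * μP (cell i ∩ G)) |>.2 ⟨i, hi, ht⟩
      rw [hQG] at this
      exact measure_ne_top _ _ this
    have h := congrArg ENNReal.toReal hQG
    rw [ENNReal.toReal_sum htop] at h
    simpa [measureReal_def, ENNReal.toReal_mul, ENNReal.toReal_div] using h
  have hmain := aux_main2 μ μP hfin'.1 hfin'.2
    (fun z : (H × Γ0) × (H × Γ0) => ((z.1.1, kB z.2) : H × Λ₁)) cell (by
      rintro ⟨h, B⟩
      ext z
      simp only [cell, Set.mem_preimage, Set.mem_singleton_iff, Prod.mk.injEq, Set.mem_prod]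
      constructor
      · rintro ⟨h1, h2⟩
        exact ⟨h1, h2 ▸ hkB z.2⟩
      · rintro ⟨h1, h2⟩
        exact ⟨h1, huniq _ _ h2⟩) hcellm G (hle G hG) hQGr
  have hΔ : DΔ = ∑ i, μ.real (cell i) * Real.log (μ.real (cell i) / μP.real (cell i)) := by
    rw [hDΔ, Fintype.sum_prod_type]
    refine Finset.sum_congr rfl fun h _ => ?_
    exact (Finset.sum_coe_sort Λ₁ (fun B => (μ ((Prod.fst ⁻¹' {h}) ×ˢ B)).toReal *
        Real.log ((μ ((Prod.fst ⁻¹' {h}) ×ˢ B)).toReal /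
          (μP ((Prod.fst ⁻¹' {h}) ×ˢ B)).toReal))).symm
  rw [hDr, hΔ]
  exact hmain
end

section
/- Let $\Gamma$ be a compact metric space with Borel $\sigma$-algebra $\mathcal{B}$, $P$ a Feller transition kernel, and $\nu$ a Borel probability measure with $I(\nu) < \infty$, where $I$ is the Donsker-Varadhan functional $I(\nu) = -\inf_{f>0 \text{ continuous}} \int \log\frac{Pf}{f}\,d\nu$. Then there exists a probability measure $\mu$ on $\Gamma\times\Gamma$ whose left and right marginals both equal $\nu$, such that $D(\mu \Vert \mu^P) = I(\nu)$, where $\mu^P(A\times B) = \int_A P(x,B)\,d\nu(x)$ and $D$ is relative entropy. In particular, the infimum in the variational identity $I(\nu) = \inf\{D(\mu\Vert\mu^P) : \mu \in M(\Gamma\times\Gamma),\ \mu_L = \mu_R = \nu\}$ is attained. -/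
open MeasureTheory ProbabilityTheory
open scoped Classical

/-- The Donsker-Varadhan action functional
`I(ν) = - inf { ∫ log (P f (x) / f(x)) ν(dx) : f positive continuous }`. -/
noncomputable def dvRate {Γ : Type*} [MeasurableSpace Γ] [TopologicalSpace Γ]
    (P : Kernel Γ Γ) (ν : Measure Γ) : ℝ :=
  - ⨅ f : {f : Γ → ℝ // Continuous f ∧ ∀ x, 0 < f x},
      ∫ x, Real.log ((∫ y, f.1 y ∂ P x) / f.1 x) ∂ν

/-- Hahn-Banach for a convex dominating function. -/
lemma hb_convex {E : Type*} [AddCommGroup E] [Module ℝ E] (q : E → ℝ)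
    (hq : ConvexOn ℝ Set.univ q) (f : E →ₗ[ℝ] ℝ) (S : Submodule ℝ E)
    (hf : ∀ x ∈ S, f x ≤ q x) :
    ∃ g : E →ₗ[ℝ] ℝ, (∀ x ∈ S, g x = f x) ∧ ∀ x, g x ≤ q x := by
  have hcv : ∀ x y (a b : ℝ), 0 ≤ a → 0 ≤ b → a + b = 1 →
      q (a • x + b • y) ≤ a • q x + b • q y := fun x y a b ha hb hab =>
    hq.2 (Set.mem_univ x) (Set.mem_univ y) ha hb hab
  have hq0 : 0 ≤ q 0 := by simpa using hf 0 S.zero_mem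
  let N : E → ℝ := fun x => ⨅ t : {t : ℝ // 0 < t}, t.1 * q (t.1⁻¹ • x)
  have hlb : ∀ x (t : ℝ), 0 < t → - q (-x) ≤ t * q (t⁻¹ • x) := by
    intro x t ht
    have h := hcv (t⁻¹ • x) (-x) (t / (1 + t))
      (1 / (1 + t)) (by positivity) (by positivity) (by field_simp; ring)
    have e : (t / (1 + t)) • t⁻¹ • x + (1 / (1 + t)) • (-x) = 0 := by
      rw [smul_smul, smul_neg, ← sub_eq_add_neg, ← sub_smul]
      have : t / (1 + t) * t⁻¹ - 1 / (1 + t) = 0 := by field_simp; ring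
      rw [this, zero_smul]
    rw [e] at h
    have h2 : 0 ≤ (t * q (t⁻¹ • x) + q (-x)) / (1 + t) := by
      refine (hq0.trans h).trans (le_of_eq ?_)
      simp only [smul_eq_mul]; field_simp
    have h3 : 0 ≤ t * q (t⁻¹ • x) + q (-x) := by
      by_contra hc
      push Not at hc
      have := div_neg_of_neg_of_pos hc (by positivity : 0 < 1 + t)
      linarith
    linarith
  have hbdd : ∀ x, BddBelow (Set.range fun t : {t : ℝ // 0 < t} => t.1 * q (t.1⁻¹ • x)) := by
    intro x
    refine ⟨- q (-x), ?_⟩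
    rintro _ ⟨t, rfl⟩
    exact hlb x t.1 t.2
  have : Nonempty {t : ℝ // 0 < t} := ⟨⟨1, one_pos⟩⟩
  have hNle : ∀ x (t : ℝ), 0 < t → N x ≤ t * q (t⁻¹ • x) := fun x t ht =>
    ciInf_le (hbdd x) ⟨t, ht⟩
  have hhom : ∀ c : ℝ, 0 < c → ∀ x, N (c • x) ≤ c * N x := by
    intro c hc x
    rw [← div_le_iff₀' hc]
    refine le_ciInf fun t => ?_
    rw [div_le_iff₀' hc]
    refine (hNle (c • x) (c * t.1) (mul_pos hc t.2)).trans (le_of_eq ?_)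
    rw [smul_smul]
    have := t.2.ne'
    have : (c * t.1)⁻¹ * c = t.1⁻¹ := by field_simp
    rw [this, mul_assoc]
  have N_hom : ∀ c : ℝ, 0 < c → ∀ x, N (c • x) = c * N x := by
    intro c hc x
    refine le_antisymm (hhom c hc x) ?_
    have h := hhom c⁻¹ (inv_pos.2 hc) (c • x)
    rw [smul_smul, inv_mul_cancel₀ hc.ne', one_smul] at h
    rwa [inv_mul_eq_div, le_div_iff₀' hc] at h
  have N_add : ∀ x y, N (x + y) ≤ N x + N y := by
    intro x y
    rw [← sub_le_iff_le_add]
    refine le_ciInf fun s => ?_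
    rw [sub_le_comm]
    refine le_ciInf fun t => ?_
    rw [sub_le_iff_le_add]
    obtain ⟨s, hs⟩ := s
    obtain ⟨t, ht⟩ := t
    have hst : 0 < s + t := by positivity
    refine (hNle (x + y) (s + t) hst).trans ?_
    have h := hcv (s⁻¹ • x) (t⁻¹ • y) (s / (s + t))
      (t / (s + t)) (by positivity) (by positivity) (by field_simp)
    have e : (s / (s + t)) • s⁻¹ • x + (t / (s + t)) • t⁻¹ • y = (s + t)⁻¹ • (x + y) := by
      rw [smul_smul, smul_smul, smul_add]
      congr 2 <;> field_simp
    rw [e] at h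
    have h2 := mul_le_mul_of_nonneg_left h hst.le
    refine h2.trans (le_of_eq ?_)
    simp only [smul_eq_mul]; field_simp; ring
  obtain ⟨g, hg1, hg2⟩ := exists_extension_of_le_sublinear (f.toPMap S) N N_hom N_add (by
    rintro ⟨x, hx⟩
    refine le_ciInf fun t => ?_
    have h := hf (t.1⁻¹ • x) (S.smul_mem _ hx)
    rw [map_smul, smul_eq_mul, inv_mul_eq_div, div_le_iff₀' t.2] at h
    exact h)
  refine ⟨g, fun x hx => by simpa using hg1 ⟨x, hx⟩, fun x => (hg2 x).trans ?_⟩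
  simpa using hNle x 1 one_pos

/-- Riesz-Markov on a compact space. -/
lemma riesz_prob {X : Type*} [TopologicalSpace X] [T2Space X] [CompactSpace X]
    [MeasurableSpace X] [BorelSpace X] (Λ : C(X, ℝ) →ₗ[ℝ] ℝ)
    (hpos : ∀ g : C(X, ℝ), (∀ x, 0 ≤ g x) → 0 ≤ Λ g) (h1 : Λ 1 = 1) :
    ∃ μ : Measure X, IsProbabilityMeasure μ ∧ ∀ g : C(X, ℝ), ∫ x, g x ∂μ = Λ g := by
  let Λ' : CompactlySupportedContinuousMap X ℝ →ₚ[ℝ] ℝ :=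
  { toFun := fun g => Λ g.toContinuousMap
    map_add' := fun g h => by rw [← map_add]; rfl
    map_smul' := fun c g => by
      simp only [RingHom.id_apply]
      rw [← map_smul]; rfl
    monotone' := fun g h hgh => by
      have := hpos (h.toContinuousMap - g.toContinuousMap) (fun x => sub_nonneg.2 (hgh x))
      rw [map_sub] at this
      exact sub_nonneg.1 this }
  have key : ∀ g : C(X, ℝ), ∫ x, g x ∂(RealRMK.rieszMeasure Λ') = Λ g := fun g =>
    RealRMK.integral_rieszMeasure Λ' ⟨g, HasCompactSupport.of_compactSpace g⟩
  refine ⟨RealRMK.rieszMeasure Λ', ⟨?_⟩, key⟩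
  have h := key 1
  rw [h1] at h
  simp only [ContinuousMap.one_apply, integral_const, smul_eq_mul, mul_one] at h
  rw [Measure.real, ENNReal.toReal_eq_one_iff] at h
  exact h

/-- Duality inequality extends from continuous to bounded measurable functions. -/
lemma ext_meas {X : Type*} [TopologicalSpace X] [NormalSpace X]
    [MeasurableSpace X] [BorelSpace X] (μ ρ : Measure X) [IsFiniteMeasure μ]
    [IsFiniteMeasure ρ] [(μ + ρ).WeaklyRegular] (I : ℝ)
    (h : ∀ g : C(X, ℝ), (∃ M, ∀ x, |g x| ≤ M) → ∫ x, g x ∂μ ≤ I + ∫ x, (Real.exp (g x) - 1) ∂ρ)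
    (g : X → ℝ) (hg : Measurable g) (M : ℝ) (hM : ∀ x, |g x| ≤ M) :
    ∫ x, g x ∂μ ≤ I + ∫ x, (Real.exp (g x) - 1) ∂ρ := by
  have bint : ∀ (k : X → ℝ) (m : Measure X) [IsFiniteMeasure m], Measurable k →
      (∃ C, ∀ x, |k x| ≤ C) → Integrable k m := by
    rintro k m _ hk ⟨C, hC⟩
    exact Integrable.of_bound hk.aestronglyMeasurable C (ae_of_all _ hC)
  have ebd : ∀ k : X → ℝ, (∀ x, |k x| ≤ M) → ∃ C, ∀ x, |Real.exp (k x) - 1| ≤ C := by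
    intro k hk
    refine ⟨Real.exp M + 1, fun x => ?_⟩
    have := Real.exp_le_exp.2 ((abs_le.1 (hk x)).2)
    have := Real.exp_pos (k x)
    rw [abs_le]; constructor <;> linarith
  refine le_of_forall_pos_le_add fun ε hε => ?_
  have hε' : 0 < ε / (1 + Real.exp M) := by positivity
  obtain ⟨k0, hk0, hk0i⟩ := (bint g (μ + ρ) hg ⟨M, hM⟩).exists_boundedContinuous_integral_sub_le hε'
  let k : C(X, ℝ) := ⟨fun x => max (-M) (min M (k0 x)), by fun_prop⟩
  have kM : ∀ x, |k x| ≤ M := by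
    intro x
    have : 0 ≤ M := (abs_nonneg _).trans (hM x)
    rw [abs_le]
    exact ⟨le_max_left _ _, max_le (by linarith) (min_le_left _ _)⟩
  have hgk : ∀ x, |g x - k x| ≤ |g x - k0 x| := by
    intro x
    have hx := abs_le.1 (hM x)
    have e : g x = max (-M) (min M (g x)) := by
      rw [min_eq_right hx.2, max_eq_right hx.1]
    calc |g x - k x| = |max (-M) (min M (g x)) - max (-M) (min M (k0 x))| := by rw [← e]; rfl
      _ ≤ |min M (g x) - min M (k0 x)| := abs_max_sub_max_le_max _ _ _ _ |>.trans (by simp)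
      _ ≤ |g x - k0 x| := abs_min_sub_min_le_max _ _ _ _ |>.trans (by simp)
  have km : Measurable k := k.continuous.measurable
  have absint : ∀ (m : Measure X) [IsFiniteMeasure m], Integrable (fun x => |g x - k x|) m := by
    intro m _
    exact ((bint g m hg ⟨M, hM⟩).sub (bint k m km ⟨M, kM⟩)).abs
  have hsum : ∫ x, |g x - k x| ∂μ + ∫ x, |g x - k x| ∂ρ ≤ ε / (1 + Real.exp M) := by
    rw [← integral_add_measure (absint μ) (absint ρ)]
    refine (integral_mono (absint _) ?_ hgk).trans hk0
    exact ((bint g (μ + ρ) hg ⟨M, hM⟩).sub hk0i).abs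
  have n1 : 0 ≤ ∫ x, |g x - k x| ∂μ := integral_nonneg fun x => abs_nonneg _
  have n2 : 0 ≤ ∫ x, |g x - k x| ∂ρ := integral_nonneg fun x => abs_nonneg _
  have hk := h k ⟨M, kM⟩
  have a1 : ∫ x, g x ∂μ ≤ ∫ x, k x ∂μ + ∫ x, |g x - k x| ∂μ := by
    rw [← integral_add (bint k μ km ⟨M, kM⟩) (absint μ)]
    refine integral_mono (bint g μ hg ⟨M, hM⟩) ((bint k μ km ⟨M, kM⟩).add (absint μ)) fun x => ?_
    have := le_abs_self (g x - k x)
    linarith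
  have i1 := bint (fun x => Real.exp (k x) - 1) ρ (by fun_prop) (ebd _ kM)
  have i2 := bint (fun x => Real.exp (g x) - 1) ρ (by fun_prop) (ebd _ hM)
  have a2 : ∫ x, (Real.exp (k x) - 1) ∂ρ ≤
      ∫ x, (Real.exp (g x) - 1) ∂ρ + Real.exp M * ∫ x, |g x - k x| ∂ρ := by
    rw [← integral_const_mul, ← integral_add i2 ((absint ρ).const_mul _)]
    refine integral_mono i1 (i2.add ((absint ρ).const_mul _)) fun x => ?_
    have e1 : Real.exp (g x) ≥ Real.exp (k x) * (1 + (g x - k x)) := by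
      have := Real.add_one_le_exp (g x - k x)
      calc Real.exp (k x) * (1 + (g x - k x)) ≤ Real.exp (k x) * Real.exp (g x - k x) := by
            gcongr; linarith
        _ = Real.exp (g x) := by rw [← Real.exp_add]; ring_nf
    have e2 : Real.exp (k x) ≤ Real.exp M := Real.exp_le_exp.2 (abs_le.1 (kM x)).2
    have e3 : Real.exp (k x) * (k x - g x) ≤ Real.exp M * |g x - k x| := by
      have e4 : k x - g x ≤ |g x - k x| := by
        rw [abs_sub_comm]; exact le_abs_self _
      calc Real.exp (k x) * (k x - g x) ≤ Real.exp (k x) * |g x - k x| := by gcongr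
        _ ≤ Real.exp M * |g x - k x| := by gcongr
    linarith
  have : ∫ x, |g x - k x| ∂μ + Real.exp M * ∫ x, |g x - k x| ∂ρ ≤ ε := by
    rw [le_div_iff₀ (by positivity)] at hsum
    nlinarith [Real.exp_pos M]
  linarith

/-- Recovering the relative entropy bound. -/
lemma kl_le {X : Type*} [MeasurableSpace X] (μ ρ : Measure X) [IsFiniteMeasure μ]
    [IsFiniteMeasure ρ] (I : ℝ)
    (h : ∀ g : X → ℝ, Measurable g → (∃ M, ∀ x, |g x| ≤ M) →
      ∫ x, g x ∂μ ≤ I + ∫ x, (Real.exp (g x) - 1) ∂ρ) :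
    InformationTheory.klDiv μ ρ ≤ ENNReal.ofReal I := by
  have hac : μ ≪ ρ := by
    refine Measure.AbsolutelyContinuous.mk fun A hA hρ => ?_
    have key : ∀ n : ℕ, n * μ.real A ≤ I := by
      intro n
      have := h (A.indicator fun _ => (n : ℝ)) (measurable_const.indicator hA) ⟨n, fun x => by
        by_cases hx : x ∈ A <;> simp [hx]⟩
      rw [integral_indicator_const _ hA] at this
      have z : ∫ x, (Real.exp (A.indicator (fun _ => (n : ℝ)) x) - 1) ∂ρ = 0 := by
        refine integral_eq_zero_of_ae ?_
        have : ∀ᵐ x ∂ρ, x ∉ A := measure_eq_zero_iff_ae_notMem.1 hρ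
        filter_upwards [this] with x hx
        simp [hx]
      rw [z, smul_eq_mul] at this
      linarith
    have h0 : μ.real A ≤ 0 := by
      by_contra hc
      push Not at hc
      obtain ⟨n, hn⟩ := exists_nat_gt (I / μ.real A)
      rw [div_lt_iff₀ hc] at hn
      linarith [key n]
    have := le_antisymm h0 measureReal_nonneg
    rwa [measureReal_eq_zero_iff] at this
  rw [InformationTheory.klDiv_eq_lintegral_klFun_of_ac hac]
  set d : X → ℝ := fun x => (μ.rnDeriv ρ x).toReal with hd
  have dm : Measurable d := (Measure.measurable_rnDeriv μ ρ).ennreal_toReal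
  have d0 : ∀ x, 0 ≤ d x := fun x => ENNReal.toReal_nonneg
  let c : ℕ → ℝ → ℝ := fun n s => max (1 / ((n : ℝ) + 1)) (min ((n : ℝ) + 1) s)
  have cm : ∀ n, Measurable (c n) := fun n => by fun_prop
  have cpos : ∀ (n : ℕ) (s : ℝ), 0 < c n s := fun n s => lt_max_of_lt_left (by positivity)
  have clow : ∀ (n : ℕ) (s : ℝ), 1 / ((n : ℝ) + 1) ≤ c n s := fun n s => le_max_left _ _
  have chigh : ∀ (n : ℕ) (s : ℝ), c n s ≤ (n : ℝ) + 1 := fun n s => by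
    refine max_le ?_ (min_le_left _ _)
    have : (0:ℝ) ≤ n := n.cast_nonneg
    rw [div_le_iff₀ (by positivity)]; nlinarith
  let F : ℕ → ℝ → ℝ := fun n s => s * Real.log (c n s) - (c n s - 1)
  have Fnn : ∀ (n : ℕ) (s : ℝ), 0 ≤ s → 0 ≤ F n s := by
    intro n s hs
    have hk := InformationTheory.klFun_nonneg (cpos n s).le
    unfold InformationTheory.klFun at hk
    have hn : (0:ℝ) ≤ n := n.cast_nonneg
    have : c n s * Real.log (c n s) ≤ s * Real.log (c n s) := by
      by_cases h1 : s ≤ c n s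
      · by_cases h2 : c n s ≤ s
        · have hcs := le_antisymm h2 h1
          exact le_of_eq (congrArg (· * Real.log (c n s)) hcs)
        · have : c n s ≤ 1 := by
            push Not at h2
            have : c n s = 1 / ((n:ℝ) + 1) := by
              refine (max_choice _ _).resolve_right fun hh => ?_
              have : c n s ≤ s := hh.le.trans (min_le_right _ _)
              linarith
            rw [this, div_le_iff₀ (by positivity)]; linarith
          have := Real.log_nonpos (cpos n s).le this
          nlinarith
      · push Not at h1
        have h3 : 1 ≤ c n s := by
          have : min ((n:ℝ) + 1) s < s := (le_max_right _ _).trans_lt h1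
          have : min ((n:ℝ)+1) s = (n:ℝ)+1 := (min_choice _ _).resolve_right this.ne
          have : (n:ℝ)+1 ≤ c n s := this.ge.trans (le_max_right _ _)
          linarith
        have := Real.log_nonneg h3
        nlinarith
    simp only [F]; linarith
  have Flim : ∀ s, 0 ≤ s →
      Filter.Tendsto (fun n => F n s) Filter.atTop (nhds (InformationTheory.klFun s)) := by
    intro s hs
    have cl : Filter.Tendsto (fun n => c n s) Filter.atTop (nhds s) := by
      have h1 : Filter.Tendsto (fun n : ℕ => max (1 / ((n : ℝ) + 1)) s) Filter.atTop
          (nhds (max 0 s)) :=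
        tendsto_one_div_add_atTop_nhds_zero_nat.max tendsto_const_nhds
      rw [max_eq_right hs] at h1
      refine h1.congr' ?_
      obtain ⟨n0, hn0⟩ := exists_nat_ge s
      filter_upwards [Filter.eventually_ge_atTop n0] with n hn
      have : (n0:ℝ) ≤ n := by exact_mod_cast hn
      simp only [c]
      rw [min_eq_right (by linarith)]
    have hl : Filter.Tendsto (fun n => s * Real.log (c n s)) Filter.atTop
        (nhds (s * Real.log s)) := by
      rcases hs.eq_or_lt with rfl | hs
      · simp
      · exact (cl.log hs.ne').const_mul s
    have := hl.sub (cl.sub_const 1)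
    convert this using 2
    unfold InformationTheory.klFun; ring
  have Fint : ∀ n, ∫⁻ x, ENNReal.ofReal (F n (d x)) ∂ρ ≤ ENNReal.ofReal I := by
    intro n
    have lbd : ∀ x, |Real.log (c n (d x))| ≤ Real.log ((n:ℝ) + 1) := by
      intro x
      rw [abs_le]
      constructor
      · rw [← Real.log_inv]
        exact Real.log_le_log (by positivity) (by simpa using clow n (d x))
      · exact Real.log_le_log (cpos _ _) (chigh _ _)
    have lm : Measurable fun x => Real.log (c n (d x)) :=
      Real.measurable_log.comp ((cm n).comp dm)
    have hh := h _ lm ⟨_, lbd⟩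
    have e1 : ∫ x, Real.log (c n (d x)) ∂μ = ∫ x, d x * Real.log (c n (d x)) ∂ρ := by
      have := integral_rnDeriv_smul (f := fun x => Real.log (c n (d x))) hac
      simpa [smul_eq_mul] using this.symm
    have i1 : Integrable (fun x => d x * Real.log (c n (d x))) ρ := by
      refine Integrable.mul_bdd (c := Real.log ((n:ℝ)+1)) Measure.integrable_toReal_rnDeriv lm.aestronglyMeasurable (ae_of_all _ lbd)
    have i2 : Integrable (fun x => c n (d x) - 1) ρ := by
      refine Integrable.of_bound (((cm n).comp dm).sub_const 1).aestronglyMeasurable ((n:ℝ)+1)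
        (ae_of_all _ fun x => ?_)
      have := cpos n (d x)
      have := chigh n (d x)
      have hn : (0:ℝ) ≤ n := n.cast_nonneg
      rw [Real.norm_eq_abs, abs_le]; constructor <;> linarith
    have i3 : Integrable (fun x => F n (d x)) ρ := i1.sub i2
    rw [← ofReal_integral_eq_lintegral_ofReal i3 (ae_of_all _ fun x => Fnn n _ (d0 x))]
    refine ENNReal.ofReal_le_ofReal ?_
    have e2 : ∫ x, F n (d x) ∂ρ = _ := integral_sub i1 i2
    simp only [Real.exp_log (cpos n _)] at hh
    change ∫ x, F n (d x) ∂ρ ≤ I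
    rw [e2, ← e1]; linarith
  calc ∫⁻ x, ENNReal.ofReal (InformationTheory.klFun (d x)) ∂ρ
      = ∫⁻ x, Filter.liminf (fun n => ENNReal.ofReal (F n (d x))) Filter.atTop ∂ρ := by
        refine lintegral_congr fun x => ?_
        exact ((ENNReal.continuous_ofReal.tendsto _).comp (Flim _ (d0 x))).liminf_eq.symm
    _ ≤ Filter.liminf (fun n => ∫⁻ x, ENNReal.ofReal (F n (d x)) ∂ρ) Filter.atTop := by
        refine lintegral_liminf_le fun n => ?_
        have := (cm n).comp dm
        simp only [F]
        exact ((dm.mul (Real.measurable_log.comp this)).sub (this.sub_const 1)).ennreal_ofReal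
    _ ≤ ENNReal.ofReal I := by
        refine (Filter.liminf_le_liminf (Filter.Eventually.of_forall Fint)).trans ?_
        simp

/-- Gibbs variational inequality. -/
lemma gibbs {X : Type*} [MeasurableSpace X] (μ ρ : Measure X) [IsProbabilityMeasure μ]
    [IsProbabilityMeasure ρ] (hac : μ ≪ ρ) (hint : Integrable (llr μ ρ) μ)
    (g : X → ℝ) (hg : Measurable g) (M : ℝ) (hM : ∀ x, |g x| ≤ M)
    (h1 : ∫ x, Real.exp (g x) ∂ρ = 1) : ∫ x, g x ∂μ ≤ ∫ x, llr μ ρ x ∂μ := by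
  have hgμ : Integrable g μ := Integrable.of_bound hg.aestronglyMeasurable M (ae_of_all _ hM)
  have heρ : Integrable (fun x => Real.exp (g x)) ρ :=
    Integrable.of_bound (by fun_prop) (Real.exp M) (ae_of_all _ fun x => by
      rw [Real.norm_eq_abs, abs_of_pos (Real.exp_pos _)]
      exact Real.exp_le_exp.2 (abs_le.1 (hM x)).2)
  have := isProbabilityMeasure_tilted heρ
  have hac' : μ ≪ ρ.tilted g := hac.trans (absolutelyContinuous_tilted heρ)
  have e := integral_llr_tilted_right hac hgμ heρ hint
  have := InformationTheory.integral_llr_add_sub_measure_univ_nonneg hac'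
    (integrable_llr_tilted_right hac hgμ hint heρ)
  rw [e, h1] at this
  simp at this
  linarith

section lse

variable {Γ : Type*} [MeasurableSpace Γ]

/-- Inner exponential moment. -/
noncomputable def expMom (P : Kernel Γ Γ) (g : Γ × Γ → ℝ) (x : Γ) : ℝ :=
  ∫ y, Real.exp (g (x, y)) ∂(P x)

/-- Averaged log-Laplace functional. -/
noncomputable def lse (P : Kernel Γ Γ) (ν : Measure Γ) (g : Γ × Γ → ℝ) : ℝ :=
  ∫ x, Real.log (expMom P g x) ∂ν

lemma exp_int {X : Type*} [MeasurableSpace X] (m : Measure X) [IsFiniteMeasure m] (g : X → ℝ)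
    (hg : Measurable g) (M : ℝ) (hM : ∀ z, |g z| ≤ M) : Integrable (fun x => Real.exp (g x)) m :=
  Integrable.of_bound (by fun_prop) (Real.exp M) (ae_of_all _ fun x => by
    rw [Real.norm_eq_abs, abs_of_pos (Real.exp_pos _)]
    exact Real.exp_le_exp.2 (abs_le.1 (hM x)).2)

lemma expMom_int (P : Kernel Γ Γ) [IsMarkovKernel P] (g : Γ × Γ → ℝ) (hg : Measurable g)
    (M : ℝ) (hM : ∀ z, |g z| ≤ M) (x : Γ) : Integrable (fun y => Real.exp (g (x, y))) (P x) :=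
  exp_int (P x) (fun y => g (x, y)) (by fun_prop) M (fun y => hM _)

lemma expMom_bd (P : Kernel Γ Γ) [IsMarkovKernel P] (g : Γ × Γ → ℝ) (hg : Measurable g)
    (M : ℝ) (hM : ∀ z, |g z| ≤ M) (x : Γ) :
    Real.exp (-M) ≤ expMom P g x ∧ expMom P g x ≤ Real.exp M := by
  have hi := expMom_int P g hg M hM x
  constructor
  · have := integral_mono (integrable_const (Real.exp (-M))) hi
      (fun y => Real.exp_le_exp.2 (abs_le.1 (hM (x, y))).1)
    simpa [expMom] using this
  · have := integral_mono hi (integrable_const (Real.exp M))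
      (fun y => Real.exp_le_exp.2 (abs_le.1 (hM (x, y))).2)
    simpa [expMom] using this

lemma expMom_pos (P : Kernel Γ Γ) [IsMarkovKernel P] (g : Γ × Γ → ℝ) (hg : Measurable g)
    (M : ℝ) (hM : ∀ z, |g z| ≤ M) (x : Γ) : 0 < expMom P g x :=
  (Real.exp_pos _).trans_le (expMom_bd P g hg M hM x).1

lemma expMom_meas (P : Kernel Γ Γ) [IsMarkovKernel P] (g : Γ × Γ → ℝ) (hg : Measurable g) :
    Measurable (expMom P g) := by
  have : StronglyMeasurable (Function.uncurry fun x y => Real.exp (g (x, y))) := by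
    apply Measurable.stronglyMeasurable
    exact Real.measurable_exp.comp hg
  exact (this.integral_kernel_prod_right (κ := P)).measurable

lemma logMom_bd (P : Kernel Γ Γ) [IsMarkovKernel P] (g : Γ × Γ → ℝ) (hg : Measurable g)
    (M : ℝ) (hM : ∀ z, |g z| ≤ M) (x : Γ) : |Real.log (expMom P g x)| ≤ M := by
  have h := expMom_bd P g hg M hM x
  have hp := expMom_pos P g hg M hM x
  rw [abs_le]
  exact ⟨(Real.le_log_iff_exp_le hp).2 h.1, (Real.log_le_iff_le_exp hp).2 h.2⟩

lemma logMom_int (P : Kernel Γ Γ) [IsMarkovKernel P] (ν : Measure Γ) [IsProbabilityMeasure ν]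
    (g : Γ × Γ → ℝ) (hg : Measurable g)
    (M : ℝ) (hM : ∀ z, |g z| ≤ M) : Integrable (fun x => Real.log (expMom P g x)) ν :=
  Integrable.of_bound (Real.measurable_log.comp (expMom_meas P g hg)).aestronglyMeasurable M
    (ae_of_all _ (logMom_bd P g hg M hM))

lemma lse_le (P : Kernel Γ Γ) [IsMarkovKernel P] (ν : Measure Γ) [IsProbabilityMeasure ν]
    (g : Γ × Γ → ℝ) (hg : Measurable g) (M : ℝ) (hM : ∀ z, |g z| ≤ M) :
    lse P ν g ≤ ∫ z, (Real.exp (g z) - 1) ∂(ν.compProd P) := by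
  have hi := exp_int (ν.compProd P) g hg M hM
  have hZ : Integrable (expMom P g) ν := by
    refine Integrable.of_bound (expMom_meas P g hg).aestronglyMeasurable (Real.exp M)
      (ae_of_all _ fun x => ?_)
    rw [Real.norm_eq_abs, abs_of_pos (expMom_pos P g hg M hM x)]
    exact (expMom_bd P g hg M hM x).2
  rw [integral_sub hi (integrable_const _), Measure.integral_compProd hi]
  have e : ∫ x, ∫ y, Real.exp (g (x, y)) ∂(P x) ∂ν - ∫ z, (1:ℝ) ∂(ν.compProd P)
      = ∫ x, (expMom P g x - 1) ∂ν := by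
    rw [integral_sub hZ (integrable_const _)]
    simp [expMom]
  rw [e]
  refine integral_mono (logMom_int P ν g hg M hM) (hZ.sub (integrable_const _)) fun x => ?_
  exact Real.log_le_sub_one_of_pos (expMom_pos P g hg M hM x)

lemma lse_convex (P : Kernel Γ Γ) [IsMarkovKernel P] (ν : Measure Γ) [IsProbabilityMeasure ν]
    (g h : Γ × Γ → ℝ) (hg : Measurable g) (hh : Measurable h) (M : ℝ) (hM : ∀ z, |g z| ≤ M)
    (hM' : ∀ z, |h z| ≤ M) (a b : ℝ) (ha : 0 ≤ a) (hb : 0 ≤ b) (hab : a + b = 1) :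
    lse P ν (fun z => a * g z + b * h z) ≤ a * lse P ν g + b * lse P ν h := by
  have km : Measurable (fun z => a * g z + b * h z) := by fun_prop
  have kM : ∀ z, |a * g z + b * h z| ≤ M := by
    intro z
    calc |a * g z + b * h z| ≤ |a * g z| + |b * h z| := abs_add_le _ _
      _ = a * |g z| + b * |h z| := by rw [abs_mul, abs_mul, abs_of_nonneg ha, abs_of_nonneg hb]
      _ ≤ a * M + b * M := by gcongr; exacts [hM z, hM' z]
      _ = M := by rw [← add_mul, hab, one_mul]
  unfold lse
  rw [← integral_const_mul, ← integral_const_mul,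
    ← integral_add ((logMom_int P ν g hg M hM).const_mul a)
      ((logMom_int P ν h hh M hM').const_mul b)]
  refine integral_mono (logMom_int P ν _ km M kM) (((logMom_int P ν g hg M hM).const_mul a).add
      ((logMom_int P ν h hh M hM').const_mul b)) fun x => ?_
  have hA := expMom_pos P g hg M hM x
  have hB := expMom_pos P h hh M hM' x
  have hK := expMom_pos P _ km M kM x
  change Real.log (expMom P (fun z => a * g z + b * h z) x) ≤
    a * Real.log (expMom P g x) + b * Real.log (expMom P h x)
  rw [Real.log_le_iff_le_exp hK]
  set A := expMom P g x with hAd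
  set B := expMom P h x with hBd
  have iA := expMom_int P g hg M hM x
  have iB := expMom_int P h hh M hM' x
  have pt : ∀ y, Real.exp (a * g (x, y) + b * h (x, y)) ≤
      Real.exp (a * Real.log A + b * Real.log B) *
        (a / A * Real.exp (g (x, y)) + b / B * Real.exp (h (x, y))) := by
    intro y
    have c := convexOn_exp.2 (Set.mem_univ (g (x, y) - Real.log A))
      (Set.mem_univ (h (x, y) - Real.log B)) ha hb hab
    simp only [smul_eq_mul, Real.exp_sub, Real.exp_log hA, Real.exp_log hB] at c
    calc Real.exp (a * g (x, y) + b * h (x, y))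
        = Real.exp (a * Real.log A + b * Real.log B) *
          Real.exp (a * (g (x, y) - Real.log A) + b * (h (x, y) - Real.log B)) := by
          rw [← Real.exp_add]; ring_nf
      _ ≤ Real.exp (a * Real.log A + b * Real.log B) *
          (a * (Real.exp (g (x, y)) / A) + b * (Real.exp (h (x, y)) / B)) := by gcongr
      _ = _ := by ring
  have := integral_mono (expMom_int P _ km M kM x)
    (((iA.const_mul (a / A)).add (iB.const_mul (b / B))).const_mul
      (Real.exp (a * Real.log A + b * Real.log B))) pt
  refine this.trans (le_of_eq ?_)
  have e := integral_add (iA.const_mul (a / A)) (iB.const_mul (b / B))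
  rw [integral_const_mul]
  simp only [Pi.add_apply] at e ⊢
  rw [e, integral_const_mul, integral_const_mul]
  change _ * (a / A * A + b / B * B) = _
  rw [div_mul_cancel₀ _ hA.ne', div_mul_cancel₀ _ hB.ne', hab, mul_one]

lemma lse_nonpos (P : Kernel Γ Γ) [IsMarkovKernel P] (ν : Measure Γ) [IsProbabilityMeasure ν]
    (g : Γ × Γ → ℝ) (hg : Measurable g) (M : ℝ) (hM : ∀ z, |g z| ≤ M) (h0 : ∀ z, g z ≤ 0) :
    lse P ν g ≤ 0 := by
  refine integral_nonpos fun x => Real.log_nonpos (expMom_pos P g hg M hM x).le ?_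
  have := integral_mono (expMom_int P g hg M hM x) (integrable_const (1:ℝ))
    (fun y => Real.exp_le_one_iff.2 (h0 (x, y)))
  simpa [expMom] using this

/-- Conditional version of the Gibbs inequality. -/
lemma gibbs_cond (P : Kernel Γ Γ) [IsMarkovKernel P] (ν : Measure Γ) [IsProbabilityMeasure ν]
    (μ : Measure (Γ × Γ)) [IsProbabilityMeasure μ] (hμ : μ.fst = ν)
    (hac : μ ≪ ν.compProd P) (hint : Integrable (llr μ (ν.compProd P)) μ)
    (g : Γ × Γ → ℝ) (hg : Measurable g) (M : ℝ) (hM : ∀ z, |g z| ≤ M) :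
    ∫ z, g z ∂μ - lse P ν g ≤ ∫ z, llr μ (ν.compProd P) z ∂μ := by
  have lm : Measurable fun x => Real.log (expMom P g x) :=
    Real.measurable_log.comp (expMom_meas P g hg)
  have km : Measurable (fun z : Γ × Γ => g z - Real.log (expMom P g z.1)) :=
    hg.sub (lm.comp measurable_fst)
  have kM : ∀ z : Γ × Γ, |g z - Real.log (expMom P g z.1)| ≤ M + M := fun z =>
    (abs_sub _ _).trans (add_le_add (hM z) (logMom_bd P g hg M hM z.1))
  have h1 : ∫ z, Real.exp (g z - Real.log (expMom P g z.1)) ∂(ν.compProd P) = 1 := by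
    rw [Measure.integral_compProd (exp_int (ν.compProd P) _ km _ kM)]
    have : ∀ x, ∫ y, Real.exp (g (x, y) - Real.log (expMom P g x)) ∂(P x) = 1 := by
      intro x
      have hp := expMom_pos P g hg M hM x
      simp only [Real.exp_sub, Real.exp_log hp]
      rw [integral_div]
      exact div_self hp.ne'
    simp [this]
  have h := gibbs μ (ν.compProd P) hac hint _ km _ kM h1
  have li := logMom_int P ν g hg M hM
  rw [← hμ] at li
  have li' : Integrable (fun z : Γ × Γ => Real.log (expMom P g z.1)) μ :=
    li.comp_measurable measurable_fst
  rw [integral_sub (Integrable.of_bound hg.aestronglyMeasurable M (ae_of_all _ hM)) li'] at h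
  have e : ∫ z, Real.log (expMom P g z.1) ∂μ = lse P ν g := by
    unfold lse
    rw [← hμ, Measure.fst, integral_map measurable_fst.aemeasurable lm.aestronglyMeasurable]
  rwa [e] at h

end lse

lemma marg_ext {Γ : Type*} [MetricSpace Γ] [MeasurableSpace Γ] [BorelSpace Γ]
    (m ν : Measure Γ) [IsFiniteMeasure m] [IsFiniteMeasure ν]
    (h : ∀ u : C(Γ, ℝ), ∫ x, u x ∂m = ∫ x, u x ∂ν) : m = ν :=
  ext_of_forall_integral_eq_of_IsFiniteMeasure fun f => h f.toContinuousMap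

/-- Donsker-Varadhan variational characterization, formula (3.66):
if `I(ν) < ∞` then there is a probability measure `μ` on `Γ × Γ` with both
marginals equal to `ν` and `D(μ‖μ^P) = I(ν)`, where `μ^P = ν ⊗ₘ P`; moreover
`I(ν) ≤ D(μ'‖μ'^P)` for every such `μ'`, i.e. the infimum in the variational
identity is attained. -/
theorem stmt_19 {Γ : Type*} [MetricSpace Γ] [CompactSpace Γ]
    [MeasurableSpace Γ] [BorelSpace Γ]
    (P : Kernel Γ Γ) [IsMarkovKernel P]
    (hFeller : ∀ f : Γ → ℝ, Continuous f → Continuous (fun x => ∫ y, f y ∂ P x))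
    (ν : Measure Γ) [IsProbabilityMeasure ν]
    (hfin : BddBelow (Set.range fun f : {f : Γ → ℝ // Continuous f ∧ ∀ x, 0 < f x} =>
      ∫ x, Real.log ((∫ y, f.1 y ∂ P x) / f.1 x) ∂ν)) :
    ∃ μ : Measure (Γ × Γ), IsProbabilityMeasure μ ∧ μ.fst = ν ∧ μ.snd = ν
      ∧ relEnt μ (ν.compProd P) = ((dvRate P ν : ℝ) : EReal)
      ∧ ∀ μ' : Measure (Γ × Γ), IsProbabilityMeasure μ' → μ'.fst = ν → μ'.snd = ν →
          ((dvRate P ν : ℝ) : EReal) ≤ relEnt μ' (ν.compProd P) := by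
  have hsc : SecondCountableTopology Γ := inferInstance
  set I := dvRate P ν with hI
  have cbd : ∀ {X : Type _} [TopologicalSpace X] [CompactSpace X] (g : C(X, ℝ)) (x : X),
      |g x| ≤ ‖g‖ := fun g x => g.norm_coe_le_norm x
  have key : ∀ v : C(Γ, ℝ), ∫ x, v x ∂ν - lse P ν (fun z => v z.2) ≤ I := by
    intro v
    have h := ciInf_le hfin ⟨fun x => Real.exp (v x), by fun_prop, fun x => Real.exp_pos _⟩
    have vm : Measurable (fun z : Γ × Γ => v z.2) := v.continuous.measurable.comp measurable_snd
    have vM : ∀ z : Γ × Γ, |v z.2| ≤ ‖v‖ := fun z => cbd v z.2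
    have e : ∫ x, Real.log ((∫ y, Real.exp (v y) ∂ P x) / Real.exp (v x)) ∂ν
        = lse P ν (fun z => v z.2) - ∫ x, v x ∂ν := by
      unfold lse
      rw [← integral_sub (logMom_int P ν _ vm _ vM)
        (Integrable.of_bound v.continuous.measurable.aestronglyMeasurable ‖v‖
          (ae_of_all _ (cbd v)))]
      refine integral_congr_ae (ae_of_all _ fun x => ?_)
      have hp := expMom_pos P _ vm _ vM x
      change Real.log (expMom P (fun z => v z.2) x / _) = _
      simp only
      rw [Real.log_div hp.ne' (Real.exp_pos _).ne', Real.log_exp]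
    simp only [e] at h
    simp only [hI, dvRate]
    linarith
  -- lower bound
  have lower : ∀ μ' : Measure (Γ × Γ), IsProbabilityMeasure μ' → μ'.fst = ν → μ'.snd = ν →
      ((I : ℝ) : EReal) ≤ relEnt μ' (ν.compProd P) := by
    intro μ' _ h1 h2
    unfold relEnt
    split_ifs with hc
    · rw [EReal.coe_le_coe_iff]
      have hne : Nonempty {f : Γ → ℝ // Continuous f ∧ ∀ x, 0 < f x} :=
        ⟨⟨fun _ => 1, continuous_const, fun _ => one_pos⟩⟩
      rw [hI, dvRate, neg_le]
      refine le_ciInf fun f => ?_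
      obtain ⟨f, hf, hfp⟩ := f
      let v : C(Γ, ℝ) := ⟨fun x => Real.log (f x), hf.log fun x => (hfp x).ne'⟩
      have vm : Measurable (fun z : Γ × Γ => v z.2) := v.continuous.measurable.comp measurable_snd
      have vM : ∀ z : Γ × Γ, |v z.2| ≤ ‖v‖ := fun z => cbd v z.2
      have hg := gibbs_cond P ν μ' h1 hc.1 hc.2 _ vm _ vM
      have e2 : ∫ z, v z.2 ∂μ' = ∫ x, v x ∂ν := by
        rw [← h2, Measure.snd, integral_map measurable_snd.aemeasurable
          v.continuous.measurable.aestronglyMeasurable]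
      have e : ∫ x, Real.log ((∫ y, f y ∂ P x) / f x) ∂ν
          = lse P ν (fun z => v z.2) - ∫ x, v x ∂ν := by
        unfold lse
        rw [← integral_sub (logMom_int P ν _ vm _ vM)
          (Integrable.of_bound v.continuous.measurable.aestronglyMeasurable ‖v‖
            (ae_of_all _ (cbd v)))]
        refine integral_congr_ae (ae_of_all _ fun x => ?_)
        have hp := expMom_pos P _ vm _ vM x
        have ee : expMom P (fun z => v z.2) x = ∫ y, f y ∂ P x := by
          unfold expMom
          refine integral_congr_ae (ae_of_all _ fun y => ?_)
          exact Real.exp_log (hfp y)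
        simp only
        rw [← ee, Real.log_div hp.ne' (hfp x).ne']
        rfl
      have e3 : ∫ x, Real.log (μ'.rnDeriv (ν.compProd P) x).toReal ∂μ'
          = ∫ z, llr μ' (ν.compProd P) z ∂μ' := rfl
      rw [e3]
      simp only [e]
      linarith
    · exact le_top
  -- existence
  have gm : ∀ g : C(Γ × Γ, ℝ), Measurable g := fun g => g.continuous.measurable
  let q : C(Γ × Γ, ℝ) → ℝ := fun g => lse P ν g + I
  have hq : ConvexOn ℝ Set.univ q := by
    refine ⟨convex_univ, fun g _ h _ a b ha hb hab => ?_⟩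
    have := lse_convex P ν g h (gm g) (gm h) (max ‖g‖ ‖h‖)
      (fun z => (cbd g z).trans (le_max_left _ _)) (fun z => (cbd h z).trans (le_max_right _ _))
      a b ha hb hab
    have e : (⇑(a • g + b • h) : Γ × Γ → ℝ) = fun z => a * g z + b * h z := by
      ext z; simp
    simp only [q, smul_eq_mul, e]
    calc _ ≤ a * lse P ν g + b * lse P ν h + (a + b) * I := by rw [hab, one_mul]; gcongr
      _ = _ := by ring
  have gint : ∀ (m : Measure (Γ × Γ)) [IsFiniteMeasure m] (g : C(Γ × Γ, ℝ)), Integrable g m :=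
    fun m _ g => Integrable.of_bound (gm g).aestronglyMeasurable ‖g‖ (ae_of_all _ (cbd g))
  have uint : ∀ (u : C(Γ, ℝ)), Integrable u ν :=
    fun u => Integrable.of_bound u.continuous.measurable.aestronglyMeasurable ‖u‖
      (ae_of_all _ (cbd u))
  let f : C(Γ × Γ, ℝ) →ₗ[ℝ] ℝ :=
  { toFun := fun g => ∫ z, g z ∂(ν.prod ν)
    map_add' := fun g h => integral_add (gint _ g) (gint _ h)
    map_smul' := fun c g => integral_const_mul c _ }
  let S : Submodule ℝ C(Γ × Γ, ℝ) :=
  { carrier := {g | ∃ u v : C(Γ, ℝ), ∀ z, g z = u z.1 + v z.2}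
    zero_mem' := ⟨0, 0, fun z => by simp⟩
    add_mem' := by
      rintro g h ⟨u, v, huv⟩ ⟨u', v', huv'⟩
      exact ⟨u + u', v + v', fun z => by simp [huv, huv']; ring⟩
    smul_mem' := by
      rintro c g ⟨u, v, huv⟩
      exact ⟨c • u, c • v, fun z => by simp [huv]; ring⟩ }
  have hfS : ∀ (g : C(Γ × Γ, ℝ)) (u v : C(Γ, ℝ)), (∀ z, g z = u z.1 + v z.2) →
      f g = ∫ x, u x ∂ν + ∫ x, v x ∂ν := by
    intro g u v huv
    change ∫ z, g z ∂(ν.prod ν) = _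
    simp only [huv]
    rw [integral_add ((uint u).comp_fst ν) ((uint v).comp_snd ν)]
    rw [integral_fun_fst (μ := ν) (ν := ν) (fun x => u x),
      integral_fun_snd (μ := ν) (ν := ν) (fun x => v x)]
    simp
  obtain ⟨Λ, hΛS, hΛq⟩ := hb_convex q hq f S (by
    rintro g ⟨u, v, huv⟩
    rw [hfS g u v huv]
    have vm : Measurable (fun z : Γ × Γ => v z.2) := v.continuous.measurable.comp measurable_snd
    have vM : ∀ z : Γ × Γ, |v z.2| ≤ ‖v‖ := fun z => cbd v z.2
    have e : lse P ν g = ∫ x, u x ∂ν + lse P ν (fun z => v z.2) := by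
      unfold lse
      rw [← integral_add (uint u) (logMom_int P ν _ vm _ vM)]
      refine integral_congr_ae (ae_of_all _ fun x => ?_)
      have hp := expMom_pos P _ vm _ vM x
      have : expMom P g x = Real.exp (u x) * expMom P (fun z => v z.2) x := by
        unfold expMom
        rw [← integral_const_mul]
        simp only [huv, Real.exp_add]
      simp only
      rw [this, Real.log_mul (Real.exp_pos _).ne' hp.ne', Real.log_exp]
    have := key v
    simp only [q, e]
    linarith)
  obtain ⟨μ, hμp, hμ⟩ := riesz_prob Λ (by
    intro g hg
    by_contra hc
    push Not at hc
    obtain ⟨n, hn⟩ := exists_nat_gt (I / (-Λ g))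
    rw [div_lt_iff₀ (by linarith)] at hn
    have h1 := hΛq (-((n:ℝ) • g))
    have h2 := lse_nonpos P ν (-((n:ℝ) • g) : C(Γ × Γ, ℝ)) (gm _) _ (cbd _) (fun z => by
      have := hg z
      simp only [ContinuousMap.neg_apply, ContinuousMap.smul_apply, smul_eq_mul]
      have : 0 ≤ (n:ℝ) * g z := by positivity
      linarith)
    rw [map_neg, map_smul, smul_eq_mul] at h1
    simp only [q] at h1
    linarith) (by
    rw [hΛS 1 ⟨1, 0, fun z => by simp⟩, hfS 1 1 0 (fun z => by simp)]
    simp)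
  have hfst : μ.fst = ν := by
    refine marg_ext _ _ fun u => ?_
    rw [Measure.fst, integral_map measurable_fst.aemeasurable
      u.continuous.measurable.aestronglyMeasurable]
    let g : C(Γ × Γ, ℝ) := ⟨fun z => u z.1, by fun_prop⟩
    have hg : ∀ z, g z = u z.1 + (0 : C(Γ, ℝ)) z.2 := fun z => by simp [g]
    have := hμ g
    rw [hΛS g ⟨u, 0, hg⟩, hfS g u 0 hg] at this
    simp only [ContinuousMap.zero_apply, integral_zero, add_zero] at this
    exact this
  have hsnd : μ.snd = ν := by
    refine marg_ext _ _ fun u => ?_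
    rw [Measure.snd, integral_map measurable_snd.aemeasurable
      u.continuous.measurable.aestronglyMeasurable]
    let g : C(Γ × Γ, ℝ) := ⟨fun z => u z.2, by fun_prop⟩
    have hg : ∀ z, g z = (0 : C(Γ, ℝ)) z.1 + u z.2 := fun z => by simp [g]
    have := hμ g
    rw [hΛS g ⟨0, u, hg⟩, hfS g 0 u hg] at this
    simp only [ContinuousMap.zero_apply, integral_zero, zero_add] at this
    exact this
  refine ⟨μ, hμp, hfst, hsnd, le_antisymm ?_ (lower μ hμp hfst hsnd), lower⟩
  have hI0 : 0 ≤ I := by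
    have := key 0
    simpa [lse, expMom] using this
  have hkl : InformationTheory.klDiv μ (ν.compProd P) ≤ ENNReal.ofReal I := by
    refine kl_le μ (ν.compProd P) I fun g hg ⟨M, hM⟩ => ?_
    refine ext_meas μ (ν.compProd P) I (fun k _ => ?_) g hg M hM
    rw [hμ k]
    have h1 := hΛq k
    have h2 := lse_le P ν k (gm k) _ (cbd k)
    simp only [q] at h1
    linarith
  have hne : InformationTheory.klDiv μ (ν.compProd P) ≠ ⊤ :=
    (hkl.trans_lt ENNReal.ofReal_lt_top).ne
  have hc := InformationTheory.klDiv_ne_top_iff.1 hne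
  have hval := InformationTheory.toReal_klDiv_of_measure_eq hc.1
    (by simp : μ Set.univ = (ν.compProd P) Set.univ)
  have hle := ENNReal.toReal_mono ENNReal.ofReal_ne_top hkl
  rw [ENNReal.toReal_ofReal hI0, hval] at hle
  unfold relEnt
  split_ifs with hc'
  · rw [EReal.coe_le_coe_iff]
    exact hle
  · exact absurd hc hc'
end
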